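/- The Markov operator H of the hit-and-run algorithm is positive on L₂(π): for every bounded measurable f : K → ℝ, ⟨Hf, f⟩_π = ∫_K Hf(x) f(x) dπ(x) ≥ 0, where Hf(x) = κ_d^{-1} ∫_{S^{d-1}} ℓ(x,θ)^{-1} ∫_{L(x,θ)} f(y) ρ(y) dy dθ. -/

import Mathlib

open MeasureTheory

/-- The total chord weight `ℓ(x,θ)`, as the line integral `∫_ℝ 1_K(x+sθ) ρ(x+sθ) ds`. -/
noncomputable def chordWeight {d : ℕ} (K : Set (EuclideanSpace ℝ (Fin d)))
    (ρ : EuclideanSpace ℝ (Fin d) → ℝ) (x θ : EuclideanSpace ℝ (Fin d)) : ℝ :=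
  ∫ s : ℝ, Set.indicator K ρ (x + s • θ)

/-- The surface measure on the unit sphere `S^{d-1} ⊂ ℝ^d`, realized as the
`(d-1)`-dimensional Hausdorff measure restricted to the sphere. -/
noncomputable def sphereMeasure (d : ℕ) : Measure (EuclideanSpace ℝ (Fin d)) :=
  (μH[(d : ℝ) - 1]).restrict (Metric.sphere (0 : EuclideanSpace ℝ (Fin d)) 1)

/-- `κ_d`, the total surface measure of the unit sphere `S^{d-1}`. -/
noncomputable def kappa (d : ℕ) : ℝ := (sphereMeasure d Set.univ).toReal

/-- The probability measure `π` on `K` with density `ρ / ∫_K ρ`. -/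
noncomputable def piMeasure {d : ℕ} (K : Set (EuclideanSpace ℝ (Fin d)))
    (ρ : EuclideanSpace ℝ (Fin d) → ℝ) : Measure (EuclideanSpace ℝ (Fin d)) :=
  (∫⁻ x in K, ENNReal.ofReal (ρ x))⁻¹ •
    ((volume.restrict K).withDensity fun x => ENNReal.ofReal (ρ x))

/-- The Markov operator of the hit-and-run algorithm:
`H f (x) = κ_d⁻¹ ∫_{S^{d-1}} ℓ(x,θ)⁻¹ ∫_{L(x,θ)} f(y) ρ(y) dy dθ`, the chord integral
being the line integral `∫_ℝ 1_K(x+sθ) f(x+sθ) ρ(x+sθ) ds`. -/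
noncomputable def hitAndRun {d : ℕ} (K : Set (EuclideanSpace ℝ (Fin d)))
    (ρ : EuclideanSpace ℝ (Fin d) → ℝ) (f : EuclideanSpace ℝ (Fin d) → ℝ)
    (x : EuclideanSpace ℝ (Fin d)) : ℝ :=
  (kappa d)⁻¹ * ∫ θ, ((chordWeight K ρ x θ)⁻¹ *
    ∫ s : ℝ, Set.indicator K (fun y => f y * ρ y) (x + s • θ)) ∂(sphereMeasure d)

/-!
For a fixed direction `θ`, the average `A` of `f` over a chord is constant along each line parallel
to `θ`. The line integral of `A * f * ρ` is therefore `A` times the line integral of `f * ρ`, which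
is `ℓ⁻¹` times the square of the latter. Integrating over the lines parallel to `θ` gives
`0 ≤ ∫ A * f * ρ`, and by Fubini the form `⟨Hf, f⟩` is an average of these numbers over `θ`.

To integrate over lines without choosing coordinates on `θᗮ`, take a functional `φ` with `φ θ = 1`:
every line meets the slab `0 ≤ φ < 1` in a segment of parameter length `1`, so `∫ F` is the integral
over the slab of the line integrals of `F`.
-/

open Metric Module
open scoped Topology

section HausdorffSphere

variable {E F : Type*}
  [NormedAddCommGroup E] [MeasurableSpace E] [BorelSpace E]
  [NormedAddCommGroup F] [MeasurableSpace F] [BorelSpace F]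

lemma hausdorffMeasure_image_lt_top_of_contDiff
    [NormedSpace ℝ E] [NormedSpace ℝ F] [FiniteDimensional ℝ F]
    {g : F → E} (hg : ContDiff ℝ 1 g) {s : Set F} (hs : IsCompact s) :
    μH[finrank ℝ F] (g '' s) < ⊤ := by
  obtain ⟨L, hL⟩ :=
    (hg.locallyLipschitz.locallyLipschitzOn (s := s)).exists_lipschitzOnWith_of_compact hs
  calc μH[finrank ℝ F] (g '' s)
      ≤ (L : ENNReal) ^ (finrank ℝ F : ℝ) * μH[finrank ℝ F] s :=
        hL.hausdorffMeasure_image_le (Nat.cast_nonneg _)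
    _ < ⊤ := ENNReal.mul_lt_top (by simp) hs.measure_lt_top

lemma hausdorffMeasure_sphere_lt_top [InnerProductSpace ℝ E] [FiniteDimensional ℝ E] :
    μH[(finrank ℝ E : ℝ) - 1] (sphere (0 : E) 1) < ⊤ := by
  refine (isCompact_sphere 0 1).measure_lt_top_of_nhdsWithin fun x hx => ?_
  have hx_norm : ‖-x‖ = 1 := by simpa using hx
  have hx_ne : -x ≠ 0 := norm_ne_zero_iff.1 (by simp [hx_norm])
  let H := (ℝ ∙ (-x))ᗮ
  have finrank_H : (finrank ℝ H : ℝ) = finrank ℝ E - 1 := by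
    rw [← (ℝ ∙ (-x)).finrank_add_finrank_orthogonal, finrank_span_singleton hx_ne]
    push_cast
    ring
  -- The stereographic chart from the antipode is centred at `x`, and its inverse is smooth.
  have chart_zero : (stereographic hx_norm).symm 0 = ⟨x, hx⟩ := by
    refine (((stereographic hx_norm).eq_symm_apply ?_ trivial).2
      (stereographic_neg_apply ⟨x, hx⟩)).symm
    simpa [Subtype.ext_iff, eq_neg_iff_add_eq_zero, ← two_smul ℝ x] using hx_ne
  refine ⟨(fun w : H => stereoInvFunAux (-x) w) '' closedBall 0 1, ?_, ?_⟩
  · have image_mem : (stereographic hx_norm).symm '' closedBall 0 1 ∈ 𝓝 ⟨x, hx⟩ :=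
      chart_zero ▸ (isOpenEmbedding_stereographic_symm hx_norm).image_mem_nhds.2
        (closedBall_mem_nhds (0 : H) one_pos)
    have coe_image_mem := Filter.image_mem_map (m := Subtype.val) image_mem
    rwa [map_nhds_subtype_val, Set.image_image] at coe_image_mem
  · rw [← finrank_H]
    exact hausdorffMeasure_image_lt_top_of_contDiff
      (contDiff_stereoInvFunAux.comp H.subtypeL.contDiff) (isCompact_closedBall 0 1)

end HausdorffSphere

section LineIntegral

variable {E G : Type*} [NormedAddCommGroup E] [NormedSpace ℝ E]
  [NormedAddCommGroup G] [NormedSpace ℝ G]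

/-- The integral of `F` over the line through `x` in direction `θ`, in the parametrization
`s ↦ x + s • θ`; thus `ℓ(x,θ)` is the line integral of `1_K ρ`. -/
noncomputable def lineIntegral (F : E → G) (x θ : E) : G :=
  ∫ s : ℝ, F (x + s • θ)

/-- The average of `f` over the line through `x` in direction `θ`, with respect to the weight `r`
on that line. It is `0` when the total weight of the line is `0` or infinite. -/
noncomputable def lineAverage (r f : E → ℝ) (x θ : E) : ℝ :=
  (lineIntegral r x θ)⁻¹ * lineIntegral (fun y => f y * r y) x θ

lemma lineIntegral_add_smul_self (F : E → G) (x θ : E) (t : ℝ) :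
    lineIntegral F (x + t • θ) θ = lineIntegral F x θ := by
  unfold lineIntegral
  rw [← integral_add_left_eq_self (fun s : ℝ => F (x + s • θ)) t]
  simp only [add_smul, add_assoc]

lemma lineAverage_add_smul_self (r f : E → ℝ) (x θ : E) (t : ℝ) :
    lineAverage r f (x + t • θ) θ = lineAverage r f x θ := by
  simp only [lineAverage, lineIntegral_add_smul_self]

lemma lineIntegral_lineAverage_mul (r f F : E → ℝ) (x θ : E) :
    lineIntegral (fun y => lineAverage r f y θ * F y) x θ =
      lineAverage r f x θ * lineIntegral F x θ := by
  simp only [lineIntegral, lineAverage_add_smul_self, integral_const_mul]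

variable {r f : E → ℝ}

lemma lineIntegral_nonneg (hr : ∀ y, 0 ≤ r y) (x θ : E) : 0 ≤ lineIntegral r x θ :=
  integral_nonneg fun _ => hr _

lemma abs_lineAverage_le (hr : ∀ y, 0 ≤ r y) {C : ℝ} (hf : ∀ y, |f y| ≤ C) (x θ : E) :
    |lineAverage r f x θ| ≤ C := by
  rcases (lineIntegral_nonneg hr x θ).eq_or_lt with hℓ | hℓ
  · simpa [lineAverage, ← hℓ] using (abs_nonneg _).trans (hf x)
  have hr_line : Integrable fun s : ℝ => r (x + s • θ) := by
    by_contra h_undef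
    exact hℓ.ne' (integral_undef h_undef)
  have hfr_line : ‖lineIntegral (fun y => f y * r y) x θ‖ ≤ C * lineIntegral r x θ := by
    unfold lineIntegral
    rw [← integral_const_mul]
    refine norm_integral_le_of_norm_le (hr_line.const_mul C) (.of_forall fun s => ?_)
    rw [norm_mul, Real.norm_of_nonneg (hr _)]
    exact mul_le_mul_of_nonneg_right (hf _) (hr _)
  rwa [lineAverage, abs_mul, abs_inv, abs_of_pos hℓ, inv_mul_le_iff₀' hℓ, ← Real.norm_eq_abs]

lemma lineIntegral_lineAverage_mul_self_nonneg (hr : ∀ y, 0 ≤ r y) (x θ : E) :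
    0 ≤ lineIntegral (fun y => lineAverage r f y θ * (f y * r y)) x θ := by
  rw [lineIntegral_lineAverage_mul, lineAverage, mul_assoc]
  exact mul_nonneg (inv_nonneg.2 (lineIntegral_nonneg hr x θ)) (mul_self_nonneg _)

variable [MeasurableSpace E] [BorelSpace E] [SecondCountableTopology E]

lemma stronglyMeasurable_lineIntegral {F : E → G} (hF : StronglyMeasurable F) :
    StronglyMeasurable fun p : E × E => lineIntegral F p.1 p.2 := by
  have line_meas : Measurable fun q : (E × E) × ℝ => q.1.1 + q.2 • q.1.2 := by fun_prop
  exact (hF.comp_measurable line_meas).integral_prod_right'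

lemma measurable_lineAverage (hr : Measurable r) (hf : Measurable f) :
    Measurable fun p : E × E => lineAverage r f p.1 p.2 :=
  (stronglyMeasurable_lineIntegral hr.stronglyMeasurable).measurable.inv.mul
    (stronglyMeasurable_lineIntegral (hf.mul hr).stronglyMeasurable).measurable

variable {μ : Measure E}

lemma integrable_lineAverage_mul {σ : Measure E} [IsFiniteMeasure σ]
    (hr : ∀ y, 0 ≤ r y) (hr_meas : Measurable r) (hr_int : Integrable r μ)
    (hf_meas : Measurable f) {C : ℝ} (hf : ∀ y, |f y| ≤ C) :
    Integrable (fun p : E × E => lineAverage r f p.1 p.2 * (f p.1 * r p.1)) (μ.prod σ) := by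
  have hfr : Integrable (fun y => f y * r y) μ :=
    hr_int.bdd_mul hf_meas.aestronglyMeasurable (.of_forall hf)
  exact (hfr.comp_fst σ).bdd_mul (measurable_lineAverage hr_meas hf_meas).aestronglyMeasurable
    (.of_forall fun p => abs_lineAverage_le hr hf p.1 p.2)

variable [SFinite μ] [μ.IsAddLeftInvariant] {θ : E}

lemma measurePreserving_add_smul_prodMk {φ : StrongDual ℝ E} (hφ : φ θ = 1) :
    MeasurePreserving (fun p : ℝ × E => (p.2 + p.1 • θ, φ p.2))
      ((volume : Measure ℝ).prod μ) (μ.prod volume) := by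
  have translate : MeasurePreserving (fun p : ℝ × E => (p.1, p.2 + p.1 • θ))
      ((volume : Measure ℝ).prod μ) ((volume : Measure ℝ).prod μ) :=
    (MeasurePreserving.id volume).skew_product (g := fun s x => x + s • θ) (by fun_prop)
      (.of_forall fun s => map_add_right_eq_self μ (s • θ))
  have reflect : MeasurePreserving (fun p : E × ℝ => (p.1, φ p.1 - p.2))
      (μ.prod (volume : Measure ℝ)) (μ.prod (volume : Measure ℝ)) :=
    (MeasurePreserving.id μ).skew_product (g := fun x s => φ x - s) (by fun_prop)
      (.of_forall fun x => (Measure.measurePreserving_sub_left volume (φ x)).map_eq)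
  convert reflect.comp (Measure.measurePreserving_swap.comp translate) using 2 with p
  simp [hφ]

lemma integral_eq_setIntegral_lineIntegral [CompleteSpace G] {φ : StrongDual ℝ E}
    (hφ : φ θ = 1) {F : E → G} (hF : Integrable F μ) :
    ∫ x, F x ∂μ = ∫ x in φ ⁻¹' Set.Ico 0 1, lineIntegral F x θ ∂μ := by
  let ψ : ℝ → ℝ := (Set.Ico 0 1).indicator 1
  have hψ_int : Integrable ψ :=
    (integrableOn_const (by simp)).integrable_indicator measurableSet_Ico
  have hψ_one : ∫ t, ψ t = 1 := by simp [ψ, integral_indicator measurableSet_Ico]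
  have hψF : Integrable (fun p : E × ℝ => ψ p.2 • F p.1) (μ.prod volume) :=
    (hψ_int.smul_prod hF).swap
  have change_var := measurePreserving_add_smul_prodMk (μ := μ) hφ
  calc ∫ x, F x ∂μ
      = ∫ x, ∫ t, ψ t • F x ∂(volume : Measure ℝ) ∂μ := by
        simp only [integral_smul_const, hψ_one, one_smul]
    _ = ∫ p : E × ℝ, ψ p.2 • F p.1 ∂(μ.prod volume) := (integral_prod _ hψF).symm
    _ = ∫ p : ℝ × E, ψ (φ p.2) • F (p.2 + p.1 • θ) ∂((volume : Measure ℝ).prod μ) := by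
        rw [← change_var.map_eq] at hψF ⊢
        exact integral_map change_var.aemeasurable hψF.aestronglyMeasurable
    _ = ∫ x, ψ (φ x) • lineIntegral F x θ ∂μ := by
        refine (integral_prod_symm _ (change_var.integrable_comp_of_integrable hψF)).trans ?_
        simp only [Function.comp_apply, integral_smul, lineIntegral]
    _ = ∫ x in φ ⁻¹' Set.Ico 0 1, lineIntegral F x θ ∂μ := by
        rw [← integral_indicator (φ.measurable measurableSet_Ico)]
        congr with x
        by_cases hx : φ x ∈ Set.Ico (0 : ℝ) 1 <;> simp [ψ, Set.indicator, hx]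

lemma integral_nonneg_of_lineIntegral_nonneg (hθ : θ ≠ 0) {F : E → ℝ} (hF : Integrable F μ)
    (hF_line : ∀ x, 0 ≤ lineIntegral F x θ) : 0 ≤ ∫ x, F x ∂μ := by
  obtain ⟨φ, hφ⟩ := SeparatingDual.exists_eq_one (R := ℝ) hθ
  rw [integral_eq_setIntegral_lineIntegral hφ hF]
  exact integral_nonneg hF_line

/-- The direction law `σ` is arbitrary, and `r` plays the role of `1_K ρ`. -/
theorem hitAndRun_positive_general {σ : Measure E} [IsFiniteMeasure σ] (hσ : ∀ᵐ θ ∂σ, θ ≠ 0)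
    (hr : ∀ y, 0 ≤ r y) (hr_meas : Measurable r) (hr_int : Integrable r μ)
    (hf_meas : Measurable f) {C : ℝ} (hf : ∀ y, |f y| ≤ C) :
    0 ≤ ∫ x, (∫ θ, lineAverage r f x θ ∂σ) * (f x * r x) ∂μ := by
  have h_int := integrable_lineAverage_mul (σ := σ) hr hr_meas hr_int hf_meas hf
  simp only [← integral_mul_const]
  rw [integral_integral_swap h_int]
  refine integral_nonneg_of_ae ?_
  filter_upwards [hσ, h_int.prod_left_ae] with θ hθ hθ_int
  exact integral_nonneg_of_lineIntegral_nonneg hθ hθ_int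
    fun x => lineIntegral_lineAverage_mul_self_nonneg hr x θ

end LineIntegral

section HitAndRun

variable {d : ℕ}

instance isFiniteMeasure_sphereMeasure : IsFiniteMeasure (sphereMeasure d) := by
  have sphere_lt_top := hausdorffMeasure_sphere_lt_top (E := EuclideanSpace ℝ (Fin d))
  rw [finrank_euclideanSpace_fin] at sphere_lt_top
  exact isFiniteMeasure_restrict.2 sphere_lt_top.ne

lemma ae_sphereMeasure_ne_zero : ∀ᵐ θ ∂(sphereMeasure d), θ ≠ 0 := by
  filter_upwards [ae_restrict_mem isClosed_sphere.measurableSet] with θ hθ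
  exact ne_zero_of_mem_unit_sphere ⟨θ, hθ⟩

variable {K : Set (EuclideanSpace ℝ (Fin d))} {ρ : EuclideanSpace ℝ (Fin d) → ℝ}

lemma hitAndRun_eq_integral_lineAverage (f : EuclideanSpace ℝ (Fin d) → ℝ)
    (x : EuclideanSpace ℝ (Fin d)) :
    hitAndRun K ρ f x =
      (kappa d)⁻¹ * ∫ θ, lineAverage (K.indicator ρ) f x θ ∂(sphereMeasure d) := by
  simp only [hitAndRun, chordWeight, lineAverage, lineIntegral, Set.indicator_mul_right]

lemma integral_piMeasure (hK : MeasurableSet K) (hρ0 : ∀ y, 0 ≤ ρ y) (hρmeas : Measurable ρ)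
    (g : EuclideanSpace ℝ (Fin d) → ℝ) :
    ∫ x, g x ∂(piMeasure K ρ) = (∫ x in K, ρ x)⁻¹ * ∫ x, g x * K.indicator ρ x := by
  rw [piMeasure, integral_smul_measure, ENNReal.toReal_inv,
    ← integral_eq_lintegral_of_nonneg_ae (.of_forall hρ0) hρmeas.aestronglyMeasurable,
    integral_withDensity_eq_integral_toReal_smul (by fun_prop) (by simp), smul_eq_mul]
  simp only [ENNReal.toReal_ofReal (hρ0 _), smul_eq_mul, ← Set.indicator_mul_right,
    integral_indicator hK, mul_comm]

lemma integral_hitAndRun_mul_eq (hK : MeasurableSet K) (hρ0 : ∀ y, 0 ≤ ρ y)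
    (hρmeas : Measurable ρ) (f : EuclideanSpace ℝ (Fin d) → ℝ) :
    ∫ x, hitAndRun K ρ f x * f x ∂(piMeasure K ρ) =
      (∫ x in K, ρ x)⁻¹ * ((kappa d)⁻¹ *
        ∫ x, (∫ θ, lineAverage (K.indicator ρ) f x θ ∂(sphereMeasure d)) *
          (f x * K.indicator ρ x)) := by
  simp only [integral_piMeasure hK hρ0 hρmeas, hitAndRun_eq_integral_lineAverage, mul_assoc,
    integral_const_mul]

end HitAndRun

/-- The Markov operator `H` of the hit-and-run algorithm is positive
on `L₂(π)`: for every bounded measurable `f : K → ℝ`,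
`⟨Hf, f⟩_π = ∫_K Hf(x) f(x) dπ(x) ≥ 0`. -/
theorem hitAndRun_positive {d : ℕ} (K : Set (EuclideanSpace ℝ (Fin d)))
    (hK : MeasurableSet K) (hKint : (interior K).Nonempty)
    (ρ : EuclideanSpace ℝ (Fin d) → ℝ) (hρ0 : ∀ y, 0 ≤ ρ y)
    (hρmeas : Measurable ρ) (hρint : IntegrableOn ρ K volume)
    (hρpos : 0 < ∫ x in K, ρ x)
    (hℓ : ∀ᵐ x ∂(piMeasure K ρ), ∀ᵐ θ ∂(sphereMeasure d),
      0 < chordWeight K ρ x θ ∧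
        Integrable (fun s : ℝ => Set.indicator K ρ (x + s • θ)) volume)
    (f : EuclideanSpace ℝ (Fin d) → ℝ)
    (hfmeas : Measurable f) (hfbd : ∃ C : ℝ, ∀ y, |f y| ≤ C) :
    0 ≤ ∫ x, hitAndRun K ρ f x * f x ∂(piMeasure K ρ) := by
  obtain ⟨C, hC⟩ := hfbd
  have average_nonneg :
      0 ≤ ∫ x, (∫ θ, lineAverage (K.indicator ρ) f x θ ∂(sphereMeasure d)) *
        (f x * K.indicator ρ x) :=
    hitAndRun_positive_general ae_sphereMeasure_ne_zero (Set.indicator_nonneg fun y _ => hρ0 y)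
      (hρmeas.indicator hK) (hρint.integrable_indicator hK) hfmeas hC
  rw [integral_hitAndRun_mul_eq hK hρ0 hρmeas]
  exact mul_nonneg (inv_nonneg.2 hρpos.le)
    (mul_nonneg (inv_nonneg.2 ENNReal.toReal_nonneg) average_nonneg)
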